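/- Identification of stochastic-regime means under model M1 (sequential exchangeability B1.4): for any intervention-kernel collection q̃ (whose kernels depend only on the observed-history values) satisfying positivity B1.2, under consistency and condition B1.4 one has E[Y^{q̃}] = Ψ_{q̃}(P). In particular, the longitudinal stochastic-regime parameter γ_MTP-SI is identified by the g-formula under model M1. -/

import Mathlib

open Classical

noncomputable section

/-- Probability of the event `S` under the probability mass function `P`
on a finite sample space. -/
def pr {Ω : Type} [Fintype Ω] (P : Ω → ℝ) (S : Ω → Prop) : ℝ :=
  ∑ ω, if S ω then P ω else 0

/-- Conditional probability of `S` given `T`, with the convention that it is `0`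
when the conditioning event is null (in Lean, `x / 0 = 0`). -/
def cpr {Ω : Type} [Fintype Ω] (P : Ω → ℝ) (S T : Ω → Prop) : ℝ :=
  pr P (fun ω => S ω ∧ T ω) / pr P T

/-- Expectation of `X` under `P`. -/
def expec {Ω : Type} [Fintype Ω] (P : Ω → ℝ) (X : Ω → ℝ) : ℝ :=
  ∑ ω, X ω * P ω

/-- Conditional expectation of `X` given the event `T`, with the convention that
it is `0` when the conditioning event is null. -/
def cexp {Ω : Type} [Fintype Ω] (P : Ω → ℝ) (X : Ω → ℝ) (T : Ω → Prop) : ℝ :=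
  (∑ ω, if T ω then X ω * P ω else 0) / pr P T

/-- Observed history event `{L̄_t = l̄_t, Ā_{t-1} = ā_{t-1}}` (covariates through
time `t`, treatments strictly before `t`). -/
def histEvent {Ω Lt : Type} {K : ℕ} (L : Fin K → Ω → Lt) (A : Fin K → Ω → Fin 2)
    (t : Fin K) (lbar : Fin K → Lt) (abar : Fin K → Fin 2) : Ω → Prop :=
  fun ω => (∀ s, s ≤ t → L s ω = lbar s) ∧ (∀ s, s < t → A s ω = abar s)

/-- The g-formula `Ψ_q̃(P)` for an intervention-kernel collection `q`:
`Σ_{y,l̄_K,ā_K} y · p(y|l̄_K,ā_K) · ∏_j p(l_j|l̄_{j-1},ā_{j-1}) · ∏_t q̃_t(a_t|l̄_t,ā_{t-1})`. -/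
def gform {Ω Lt : Type} [Fintype Ω] [Fintype Lt] {K : ℕ}
    (P : Ω → ℝ) (L : Fin K → Ω → Lt) (A : Fin K → Ω → Fin 2) (Y : Ω → ℝ)
    (q : Fin K → (Fin K → Lt) → (Fin K → Fin 2) → Fin 2 → ℝ) : ℝ :=
  ∑ lbar : Fin K → Lt, ∑ abar : Fin K → Fin 2,
    cexp P Y (fun ω => (∀ s, L s ω = lbar s) ∧ (∀ s, A s ω = abar s))
      * (∏ j, cpr P (fun ω => L j ω = lbar j)
          (fun ω => (∀ s, s < j → L s ω = lbar s) ∧ (∀ s, s < j → A s ω = abar s)))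
      * (∏ t, q t lbar abar (abar t))

/-- `q` is a collection of intervention kernels: each `q t lbar abar` is a
probability mass function on `{0,1}`. -/
def IsKernel {Lt : Type} {K : ℕ}
    (q : Fin K → (Fin K → Lt) → (Fin K → Fin 2) → Fin 2 → ℝ) : Prop :=
  ∀ (t : Fin K) (lbar : Fin K → Lt) (abar : Fin K → Fin 2),
    (∀ a, 0 ≤ q t lbar abar a) ∧ (∑ a, q t lbar abar a) = 1

/-- The kernel at time `t` depends only on the history values `(l̄_t, ā_{t-1})`. -/
def KernelPrefixDep {Lt : Type} {K : ℕ}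
    (q : Fin K → (Fin K → Lt) → (Fin K → Fin 2) → Fin 2 → ℝ) : Prop :=
  ∀ (t : Fin K) (lbar lbar' : Fin K → Lt) (abar abar' : Fin K → Fin 2),
    (∀ s, s ≤ t → lbar s = lbar' s) → (∀ s, s < t → abar s = abar' s) →
    q t lbar abar = q t lbar' abar'

/-- Positivity condition B1.2. -/
def B12 {Ω Lt : Type} [Fintype Ω] {K : ℕ} (P : Ω → ℝ)
    (L : Fin K → Ω → Lt) (A : Fin K → Ω → Fin 2)
    (q : Fin K → (Fin K → Lt) → (Fin K → Fin 2) → Fin 2 → ℝ) : Prop :=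
  ∀ (t : Fin K) (lbar : Fin K → Lt) (abar : Fin K → Fin 2),
    0 < pr P (histEvent L A t lbar abar) →
    ∀ a : Fin 2, 0 < q t lbar abar a →
      0 < cpr P (fun ω => A t ω = a) (histEvent L A t lbar abar)

/-- Counterfactual covariates and natural treatment values at time `t` depend on the
static regime `ā` only through `(ā_1, ..., ā_{t-1})`. -/
def CfPrefixDep {Ω Lt : Type} {K : ℕ}
    (Lc : (Fin K → Fin 2) → Fin K → Ω → Lt)
    (Ac : (Fin K → Fin 2) → Fin K → Ω → Fin 2) : Prop :=
  ∀ (abar abar' : Fin K → Fin 2) (t : Fin K),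
    (∀ s, s < t → abar s = abar' s) → Lc abar t = Lc abar' t ∧ Ac abar t = Ac abar' t

/-- Consistency of the counterfactual process with the observed data. -/
def CfConsistent {Ω Lt : Type} {K : ℕ}
    (L : Fin K → Ω → Lt) (A : Fin K → Ω → Fin 2) (Y : Ω → ℝ)
    (Lc : (Fin K → Fin 2) → Fin K → Ω → Lt)
    (Ac : (Fin K → Fin 2) → Fin K → Ω → Fin 2)
    (Yc : (Fin K → Fin 2) → Ω → ℝ) : Prop :=
  (∀ (abar : Fin K → Fin 2) (t : Fin K) (ω : Ω),
    (∀ s, s < t → A s ω = abar s) → Lc abar t ω = L t ω ∧ Ac abar t ω = A t ω) ∧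
  (∀ (abar : Fin K → Fin 2) (ω : Ω), (∀ s, A s ω = abar s) → Yc abar ω = Y ω)

/-- Counterfactual history event `{L̄_m(ā) = l̄_m, Ā_{m-1}(ā) = ā_{m-1}}`. -/
def cfHist {Ω Lt : Type} {K : ℕ}
    (Lc : (Fin K → Fin 2) → Fin K → Ω → Lt)
    (Ac : (Fin K → Fin 2) → Fin K → Ω → Fin 2)
    (abar : Fin K → Fin 2) (m : Fin K) (lbar : Fin K → Lt) : Ω → Prop :=
  fun ω => (∀ s, s ≤ m → Lc abar s ω = lbar s) ∧ (∀ s, s < m → Ac abar s ω = abar s)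

/-- Sequential exchangeability condition B1.4: for every `m` and `ā`, the vector
`(L_{m+1}(ā), ..., L_K(ā), Y(ā))` is conditionally independent of the indicator
`1{A_m(ā) = ā_m}` given each positive-probability counterfactual history. -/
def B14 {Ω Lt : Type} [Fintype Ω] {K : ℕ} (P : Ω → ℝ)
    (Lc : (Fin K → Fin 2) → Fin K → Ω → Lt)
    (Ac : (Fin K → Fin 2) → Fin K → Ω → Fin 2)
    (Yc : (Fin K → Fin 2) → Ω → ℝ) : Prop :=
  ∀ (m : Fin K) (abar : Fin K → Fin 2) (lbar : Fin K → Lt),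
    0 < pr P (cfHist Lc Ac abar m lbar) →
    ∀ (lv : Fin K → Lt) (y : ℝ),
      cpr P (fun ω => ((∀ s, m < s → Lc abar s ω = lv s) ∧ Yc abar ω = y)
            ∧ Ac abar m ω = abar m)
          (cfHist Lc Ac abar m lbar)
        = cpr P (fun ω => (∀ s, m < s → Lc abar s ω = lv s) ∧ Yc abar ω = y)
              (cfHist Lc Ac abar m lbar)
          * cpr P (fun ω => Ac abar m ω = abar m) (cfHist Lc Ac abar m lbar)

/-- Sequential exchangeability condition B1.3: as B1.4, but with the future vector
enlarged to `(L_{m+1}(ā), ..., L_K(ā), A_{m+1}(ā), ..., A_K(ā), Y(ā))`. -/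
def B13 {Ω Lt : Type} [Fintype Ω] {K : ℕ} (P : Ω → ℝ)
    (Lc : (Fin K → Fin 2) → Fin K → Ω → Lt)
    (Ac : (Fin K → Fin 2) → Fin K → Ω → Fin 2)
    (Yc : (Fin K → Fin 2) → Ω → ℝ) : Prop :=
  ∀ (m : Fin K) (abar : Fin K → Fin 2) (lbar : Fin K → Lt),
    0 < pr P (cfHist Lc Ac abar m lbar) →
    ∀ (lv : Fin K → Lt) (av : Fin K → Fin 2) (y : ℝ),
      cpr P (fun ω => ((∀ s, m < s → Lc abar s ω = lv s)
              ∧ (∀ s, m < s → Ac abar s ω = av s) ∧ Yc abar ω = y)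
            ∧ Ac abar m ω = abar m)
          (cfHist Lc Ac abar m lbar)
        = cpr P (fun ω => (∀ s, m < s → Lc abar s ω = lv s)
              ∧ (∀ s, m < s → Ac abar s ω = av s) ∧ Yc abar ω = y)
              (cfHist Lc Ac abar m lbar)
          * cpr P (fun ω => Ac abar m ω = abar m) (cfHist Lc Ac abar m lbar)

/-- Mean outcome under the stochastic regime with intervention kernels `q`:
`E[Y^q̃] = Σ_{ā} E[ Y(ā) · ∏_t q̃_t(ā_t | L̄_t(ā), ā_{t-1}) ]`. -/
def stochMean {Ω Lt : Type} [Fintype Ω] {K : ℕ} (P : Ω → ℝ)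
    (Lc : (Fin K → Fin 2) → Fin K → Ω → Lt)
    (Yc : (Fin K → Fin 2) → Ω → ℝ)
    (q : Fin K → (Fin K → Lt) → (Fin K → Fin 2) → Fin 2 → ℝ) : ℝ :=
  ∑ abar : Fin K → Fin 2,
    expec P (fun ω => Yc abar ω * ∏ t, q t (fun s => Lc abar s ω) abar (abar t))

/-- The decision functions of a modified treatment policy depend only on
`(a, l̄_t, ā_{t-1})`. -/
def PolPrefixDep {Lt : Type} {K : ℕ}
    (g : Fin K → Fin 2 → (Fin K → Lt) → (Fin K → Fin 2) → Fin 2) : Prop :=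
  ∀ (t : Fin K) (a : Fin 2) (lbar lbar' : Fin K → Lt) (abar abar' : Fin K → Fin 2),
    (∀ s, s ≤ t → lbar s = lbar' s) → (∀ s, s < t → abar s = abar' s) →
    g t a lbar abar = g t a lbar' abar'

/-- `Ap` is the recursively defined assigned-treatment process `Ā⁺` of the MTP `g`:
`A⁺_t = g_t(A_t(Ā⁺_{t-1}), L̄_t(Ā⁺_{t-1}), Ā⁺_{t-1})`. -/
def IsMTPProcess {Ω Lt : Type} {K : ℕ}
    (Lc : (Fin K → Fin 2) → Fin K → Ω → Lt)
    (Ac : (Fin K → Fin 2) → Fin K → Ω → Fin 2)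
    (g : Fin K → Fin 2 → (Fin K → Lt) → (Fin K → Fin 2) → Fin 2)
    (Ap : Fin K → Ω → Fin 2) : Prop :=
  ∀ (t : Fin K) (ω : Ω),
    Ap t ω = g t (Ac (fun s => Ap s ω) t ω)
        (fun s => Lc (fun s' => Ap s' ω) s ω) (fun s => Ap s ω)

/-- Induced intervention kernels `q̃^g` of an MTP:
`q̃^g_t(a⁺ | l̄_t, ā_{t-1}) = Σ_{a : g_t(a,l̄_t,ā_{t-1}) = a⁺} P(A_t = a | L̄_t = l̄_t, Ā_{t-1} = ā_{t-1})`. -/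
def qMTP {Ω Lt : Type} [Fintype Ω] {K : ℕ} (P : Ω → ℝ)
    (L : Fin K → Ω → Lt) (A : Fin K → Ω → Fin 2)
    (g : Fin K → Fin 2 → (Fin K → Lt) → (Fin K → Fin 2) → Fin 2) :
    Fin K → (Fin K → Lt) → (Fin K → Fin 2) → Fin 2 → ℝ :=
  fun t lbar abar aplus =>
    ∑ a : Fin 2, if g t a lbar abar = aplus then
      cpr P (fun ω => A t ω = a) (histEvent L A t lbar abar) else 0

/-- Counterfactual (g1-stochastic) kernels `q^{g,cf}` of an MTP:
`q^{g,cf}_t(a⁺ | l̄_t, ā⁺_{t-1}) = P( g_t(A_t(Ā⁺_{t-1}), l̄_t, ā⁺_{t-1}) = a⁺ |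
  L̄_t(Ā⁺_{t-1}) = l̄_t, Ā⁺_{t-1} = ā⁺_{t-1} )`. -/
def qMTPcf {Ω Lt : Type} [Fintype Ω] {K : ℕ} (P : Ω → ℝ)
    (Lc : (Fin K → Fin 2) → Fin K → Ω → Lt)
    (Ac : (Fin K → Fin 2) → Fin K → Ω → Fin 2)
    (g : Fin K → Fin 2 → (Fin K → Lt) → (Fin K → Fin 2) → Fin 2)
    (Ap : Fin K → Ω → Fin 2) :
    Fin K → (Fin K → Lt) → (Fin K → Fin 2) → Fin 2 → ℝ :=
  fun t lbar abar aplus =>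
    cpr P (fun ω => g t (Ac (fun s => Ap s ω) t ω) lbar abar = aplus)
      (fun ω => (∀ s, s ≤ t → Lc (fun s' => Ap s' ω) s ω = lbar s) ∧
        (∀ s, s < t → Ap s ω = abar s))

lemma pr_congr {Ω : Type} [Fintype Ω] (P : Ω → ℝ) {S T : Ω → Prop} (h : ∀ ω, S ω ↔ T ω) :
    pr P S = pr P T := by
  have : S = T := funext fun ω => propext (h ω)
  rw [this]

lemma pr_nonneg' {Ω : Type} [Fintype Ω] (P : Ω → ℝ) (hP : ∀ ω, 0 ≤ P ω) (S : Ω → Prop) :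
    0 ≤ pr P S := by
  unfold pr
  refine Finset.sum_nonneg fun ω _ => ?_
  split_ifs
  · exact hP ω
  · exact le_rfl

lemma pr_mono' {Ω : Type} [Fintype Ω] (P : Ω → ℝ) (hP : ∀ ω, 0 ≤ P ω) {S T : Ω → Prop}
    (h : ∀ ω, S ω → T ω) : pr P S ≤ pr P T := by
  unfold pr
  refine Finset.sum_le_sum fun ω _ => ?_
  by_cases hS : S ω
  · simp [hS, h ω hS]
  · by_cases hT : T ω
    · simp [hS, hT, hP ω]
    · simp [hS, hT]

/-- Restricted expectation. -/
def rex {Ω : Type} [Fintype Ω] (P : Ω → ℝ) (X : Ω → ℝ) (T : Ω → Prop) : ℝ :=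
  ∑ ω, if T ω then X ω * P ω else 0

lemma rex_congr {Ω : Type} [Fintype Ω] (P : Ω → ℝ) {X X' : Ω → ℝ} {S T : Ω → Prop}
    (h : ∀ ω, S ω ↔ T ω) (hX : ∀ ω, T ω → X ω = X' ω) : rex P X S = rex P X' T := by
  unfold rex
  refine Finset.sum_congr rfl fun ω _ => ?_
  by_cases hT : T ω
  · simp [hT, (h ω).2 hT, hX ω hT]
  · have : ¬ S ω := fun hs => hT ((h ω).1 hs)
    simp [hT, this]

lemma rex_null {Ω : Type} [Fintype Ω] (P : Ω → ℝ) (hP : ∀ ω, 0 ≤ P ω) (X : Ω → ℝ)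
    {T U : Ω → Prop} (hsub : ∀ ω, T ω → U ω) (h : pr P U = 0) : rex P X T = 0 := by
  unfold rex
  refine Finset.sum_eq_zero fun ω _ => ?_
  split_ifs with hT
  · unfold pr at h
    rw [Finset.sum_eq_zero_iff_of_nonneg] at h
    · have := h ω (Finset.mem_univ _)
      rw [if_pos (hsub ω hT)] at this
      simp [this]
    · intro ω _
      split_ifs
      · exact hP ω
      · exact le_rfl
  · rfl

lemma rex_eq_sum {Ω : Type} [Fintype Ω] (P : Ω → ℝ) (X : Ω → ℝ) (T : Ω → Prop) :
    rex P X T = ∑ y ∈ Finset.univ.image X, y * pr P (fun ω => T ω ∧ X ω = y) := by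
  unfold rex pr
  simp_rw [Finset.mul_sum]
  rw [Finset.sum_comm]
  refine Finset.sum_congr rfl fun ω _ => ?_
  rw [Finset.sum_eq_single (X ω)]
  · by_cases hT : T ω <;> simp [hT]
  · intro b _ hb
    simp [Ne.symm hb]
  · intro h
    exact absurd (Finset.mem_image_of_mem X (Finset.mem_univ ω)) h

lemma cf_iff {Ω Lt : Type} {K : ℕ}
    {L : Fin K → Ω → Lt} {A : Fin K → Ω → Fin 2} {Y : Ω → ℝ}
    {Lc : (Fin K → Fin 2) → Fin K → Ω → Lt}
    {Ac : (Fin K → Fin 2) → Fin K → Ω → Fin 2}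
    {Yc : (Fin K → Fin 2) → Ω → ℝ}
    (hcons : CfConsistent L A Y Lc Ac Yc) (a : Fin K → Fin 2) (ω : Ω) (n : ℕ) :
    (∀ s : Fin K, s.val < n → Ac a s ω = a s) ↔ (∀ s : Fin K, s.val < n → A s ω = a s) := by
  induction n with
  | zero => simp
  | succ n ih =>
    constructor
    · intro h s hs
      have h1 := ih.1 (fun s hs => h s (by omega))
      rw [← (hcons.1 a s ω (fun r hr => h1 r (by have : r.val < s.val := hr; omega))).2]
      exact h s hs
    · intro h s hs
      rw [(hcons.1 a s ω (fun r hr => h r (by have : r.val < s.val := hr; omega))).2]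
      exact h s hs

/-- Key step: B1.4 in terms of restricted expectations. -/
lemma key_step {Ω Lt : Type} [Fintype Ω] {K : ℕ}
    (P : Ω → ℝ) (hP0 : ∀ ω, 0 ≤ P ω)
    (L : Fin K → Ω → Lt) (A : Fin K → Ω → Fin 2) (Y : Ω → ℝ)
    (Lc : (Fin K → Fin 2) → Fin K → Ω → Lt)
    (Ac : (Fin K → Fin 2) → Fin K → Ω → Fin 2)
    (Yc : (Fin K → Fin 2) → Ω → ℝ)
    (hcons : CfConsistent L A Y Lc Ac Yc)
    (hB14 : B14 P Lc Ac Yc) (a : Fin K → Fin 2) (l : Fin K → Lt) (m : Fin K)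
    (hpos : 0 < pr P (histEvent L A m l a)) :
    rex P (Yc a) (fun ω => (∀ s, Lc a s ω = l s) ∧ ∀ s : Fin K, s.val < m.val + 1 → A s ω = a s)
        * pr P (histEvent L A m l a)
      = rex P (Yc a) (fun ω => (∀ s, Lc a s ω = l s) ∧ ∀ s : Fin K, s.val < m.val → A s ω = a s)
        * pr P (fun ω => A m ω = a m ∧ histEvent L A m l a ω) := by
  have hH : ∀ ω, cfHist Lc Ac a m l ω ↔ histEvent L A m l a ω := by
    intro ω
    unfold cfHist histEvent
    have h1 := cf_iff hcons a ω m.val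
    constructor
    · rintro ⟨h2, h3⟩
      have h4 := h1.1 h3
      refine ⟨fun s hs => ?_, h4⟩
      rw [← (hcons.1 a s ω (fun r hr => h4 r (lt_of_lt_of_le hr hs))).1]
      exact h2 s hs
    · rintro ⟨h2, h4⟩
      refine ⟨fun s hs => ?_, h1.2 h4⟩
      rw [(hcons.1 a s ω (fun r hr => h4 r (lt_of_lt_of_le hr hs))).1]
      exact h2 s hs
  have hHm : ∀ ω, histEvent L A m l a ω → (Ac a m ω = A m ω) := fun ω h =>
    (hcons.1 a m ω h.2).2
  have hHe : cfHist Lc Ac a m l = histEvent L A m l a := funext fun ω => propext (hH ω)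
  have hsplit : ∀ ω, ((∀ s, Lc a s ω = l s) ∧ ∀ s : Fin K, s.val < m.val → A s ω = a s) ↔
      ((∀ s, m < s → Lc a s ω = l s) ∧ histEvent L A m l a ω) := by
    intro ω
    rw [← hH ω]
    unfold cfHist
    have h1 := cf_iff hcons a ω m.val
    constructor
    · rintro ⟨h2, h3⟩
      exact ⟨fun s _ => h2 s, fun s _ => h2 s, h1.2 h3⟩
    · rintro ⟨h2, h3, h4⟩
      refine ⟨fun s => ?_, h1.1 h4⟩
      rcases le_or_gt s m with h | h
      · exact h3 s h
      · exact h2 s h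
  have hlast : ∀ ω, (∀ s : Fin K, s.val < m.val + 1 → A s ω = a s) ↔
      ((∀ s : Fin K, s.val < m.val → A s ω = a s) ∧ A m ω = a m) := by
    intro ω
    constructor
    · intro h
      exact ⟨fun s hs => h s (by omega), h m (by omega)⟩
    · rintro ⟨h, h'⟩ s hs
      rcases Nat.lt_succ_iff_lt_or_eq.1 hs with h1 | h1
      · exact h s h1
      · have : s = m := Fin.ext h1
        rw [this]; exact h'
  rw [rex_eq_sum, rex_eq_sum, Finset.sum_mul, Finset.sum_mul]
  refine Finset.sum_congr rfl fun y _ => ?_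
  have hb := hB14 m a l (by rw [hHe]; exact hpos) l y
  rw [hHe] at hb
  unfold cpr at hb
  have e1 : pr P (fun ω => (((∀ s, m < s → Lc a s ω = l s) ∧ Yc a ω = y) ∧ Ac a m ω = a m)
      ∧ histEvent L A m l a ω) = pr P (fun ω => ((∀ s, Lc a s ω = l s) ∧
        ∀ s : Fin K, s.val < m.val + 1 → A s ω = a s) ∧ Yc a ω = y) := by
    refine pr_congr P fun ω => ?_
    rw [hlast ω, ← and_assoc, hsplit ω]
    constructor
    · rintro ⟨⟨⟨h1, h2⟩, h3⟩, h4⟩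
      exact ⟨⟨⟨h1, h4⟩, by rw [← hHm ω h4]; exact h3⟩, h2⟩
    · rintro ⟨⟨⟨h1, h4⟩, h3⟩, h2⟩
      exact ⟨⟨⟨h1, h2⟩, by rw [hHm ω h4]; exact h3⟩, h4⟩
  have e2 : pr P (fun ω => ((∀ s, m < s → Lc a s ω = l s) ∧ Yc a ω = y)
      ∧ histEvent L A m l a ω) = pr P (fun ω => ((∀ s, Lc a s ω = l s) ∧
        ∀ s : Fin K, s.val < m.val → A s ω = a s) ∧ Yc a ω = y) := by
    refine pr_congr P fun ω => ?_
    rw [hsplit ω]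
    tauto
  have e3 : pr P (fun ω => Ac a m ω = a m ∧ histEvent L A m l a ω)
      = pr P (fun ω => A m ω = a m ∧ histEvent L A m l a ω) := by
    refine pr_congr P fun ω => ?_
    constructor
    · rintro ⟨h1, h2⟩
      exact ⟨by rw [← hHm ω h2]; exact h1, h2⟩
    · rintro ⟨h1, h2⟩
      exact ⟨by rw [hHm ω h2]; exact h1, h2⟩
  rw [e1, e2, e3] at hb
  have hne := hpos.ne'
  field_simp at hb
  linear_combination y * hb

lemma term_ident {Ω Lt : Type} [Fintype Ω] {K : ℕ}
    (P : Ω → ℝ) (hP0 : ∀ ω, 0 ≤ P ω) (hP1 : (∑ ω, P ω) = 1)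
    (L : Fin K → Ω → Lt) (A : Fin K → Ω → Fin 2) (Y : Ω → ℝ)
    (Lc : (Fin K → Fin 2) → Fin K → Ω → Lt)
    (Ac : (Fin K → Fin 2) → Fin K → Ω → Fin 2)
    (Yc : (Fin K → Fin 2) → Ω → ℝ)
    (hcons : CfConsistent L A Y Lc Ac Yc)
    (q : Fin K → (Fin K → Lt) → (Fin K → Fin 2) → Fin 2 → ℝ)
    (hB12 : B12 P L A q)
    (hB14 : B14 P Lc Ac Yc) (a : Fin K → Fin 2) (l : Fin K → Lt)
    (hq : ∀ t, 0 < q t l a (a t)) (n : ℕ) (hn : n ≤ K) :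
    rex P (Yc a) (fun ω => ∀ s, Lc a s ω = l s) =
      rex P (Yc a) (fun ω => (∀ s, Lc a s ω = l s) ∧ ∀ s : Fin K, s.val < n → A s ω = a s)
      / pr P (fun ω => (∀ s : Fin K, s.val < n → L s ω = l s) ∧
          ∀ s : Fin K, s.val < n → A s ω = a s)
      * ∏ j : Fin n, cpr P (fun ω => L (Fin.castLE hn j) ω = l (Fin.castLE hn j))
          (fun ω => (∀ s, s < Fin.castLE hn j → L s ω = l s) ∧
            (∀ s, s < Fin.castLE hn j → A s ω = a s)) := by
  induction n with
  | zero => simp [pr, hP1]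
  | succ n ih =>
    have ih' := ih (by omega)
    rw [Fin.prod_univ_castSucc]
    set m : Fin K := ⟨n, by omega⟩ with hm
    have hc : Fin.castLE hn (Fin.last n) = m := rfl
    rw [hc]
    have hcs : ∀ j : Fin n, Fin.castLE hn (Fin.castSucc j) = Fin.castLE (by omega) j :=
      fun j => rfl
    simp only [hcs]
    set Rp := ∏ j : Fin n, cpr P
      (fun ω => L (Fin.castLE (by omega : n ≤ K) j) ω = l (Fin.castLE (by omega : n ≤ K) j))
          (fun ω => (∀ s, s < Fin.castLE (by omega : n ≤ K) j → L s ω = l s) ∧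
            (∀ s, s < Fin.castLE (by omega : n ≤ K) j → A s ω = a s)) with hRp
    have hle : ∀ s : Fin K, s ≤ m ↔ s.val < n + 1 := fun s => Nat.lt_succ_iff.symm
    have hlt : ∀ s : Fin K, s < m ↔ s.val < n := fun s => Iff.rfl
    have hor : ∀ s : Fin K, s.val < n + 1 → s.val < n ∨ s = m := by
      intro s hs
      rcases Nat.lt_succ_iff_lt_or_eq.1 hs with h1 | h1
      · exact Or.inl h1
      · exact Or.inr (Fin.ext h1)
    have eH : pr P (fun ω => (∀ s : Fin K, s.val < n + 1 → L s ω = l s) ∧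
          ∀ s : Fin K, s.val < n + 1 → A s ω = a s)
        = pr P (fun ω => A m ω = a m ∧ histEvent L A m l a ω) := by
      refine pr_congr P fun ω => ?_
      unfold histEvent
      simp only [hle, hlt]
      constructor
      · rintro ⟨h1, h2⟩
        exact ⟨h2 m (Nat.lt_succ_self n), h1, fun s hs => h2 s (by omega)⟩
      · rintro ⟨h1, h2, h3⟩
        refine ⟨h2, fun s hs => ?_⟩
        rcases hor s hs with h | h
        · exact h3 s h
        · rw [h]; exact h1
    have eh : pr P (fun ω => L m ω = l m ∧ ((∀ s, s < m → L s ω = l s) ∧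
        (∀ s, s < m → A s ω = a s))) = pr P (histEvent L A m l a) := by
      refine pr_congr P fun ω => ?_
      unfold histEvent
      simp only [hle, hlt]
      constructor
      · rintro ⟨h1, h2, h3⟩
        refine ⟨fun s hs => ?_, h3⟩
        rcases hor s hs with h | h
        · exact h2 s h
        · rw [h]; exact h1
      · rintro ⟨h2, h3⟩
        exact ⟨h2 m (Nat.lt_succ_self n), fun s hs => h2 s (by omega), h3⟩
    rw [eH]
    unfold cpr
    rw [eh]
    have hHn : pr P (fun ω => (∀ s, s < m → L s ω = l s) ∧ (∀ s, s < m → A s ω = a s))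
        = pr P (fun ω => (∀ s : Fin K, s.val < n → L s ω = l s) ∧
          ∀ s : Fin K, s.val < n → A s ω = a s) := rfl
    rw [hHn]
    rcases (pr_nonneg' P hP0 (histEvent L A m l a)).eq_or_lt with h0 | hpos
    · have hM : rex P (Yc a) (fun ω => (∀ s, Lc a s ω = l s) ∧
          ∀ s : Fin K, s.val < n → A s ω = a s) = 0 := by
        refine rex_null P hP0 _ (U := histEvent L A m l a) ?_ h0.symm
        rintro ω ⟨h1, h2⟩
        refine ⟨fun s hs => ?_, h2⟩
        rw [← (hcons.1 a s ω (fun r hr => h2 r (lt_of_lt_of_le hr hs))).1]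
        exact h1 s
      rw [ih', hM, ← h0]
      simp
    · have hk := key_step P hP0 L A Y Lc Ac Yc hcons hB14 a l m hpos
      have hHp : 0 < pr P (fun ω => A m ω = a m ∧ histEvent L A m l a ω) := by
        have := hB12 m l a hpos (a m) (hq m)
        unfold cpr at this
        have h2 := mul_pos this hpos
        rwa [div_mul_cancel₀ _ hpos.ne'] at h2
      have hnp : 0 < pr P (fun ω => (∀ s : Fin K, s.val < n → L s ω = l s) ∧
          ∀ s : Fin K, s.val < n → A s ω = a s) := by
        refine lt_of_lt_of_le hpos (pr_mono' P hP0 ?_)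
        rintro ω ⟨h1, h2⟩
        exact ⟨fun s hs => h1 s (le_of_lt hs), h2⟩
      have hk' := (eq_div_iff hHp.ne').2 hk.symm
      rw [ih']
      change rex P (Yc a) (fun ω => (∀ s, Lc a s ω = l s) ∧
          ∀ s : Fin K, s.val < n → A s ω = a s) = _ at hk'
      rw [hk']
      change _ = rex P (Yc a) (fun ω => (∀ s, Lc a s ω = l s) ∧
          ∀ s : Fin K, s.val < m.val + 1 → A s ω = a s) / _ * (Rp * _)
      have h1 := hnp.ne'
      have h2 := hHp.ne'
      field_simp

/-- Identification of stochastic-regime means under model `M1`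
(sequential exchangeability B1.4): for any intervention-kernel collection `q̃`
(depending only on observed-history values) satisfying positivity B1.2, under
consistency and B1.4 one has `E[Y^q̃] = Ψ_q̃(P)`; in particular the longitudinal
stochastic-regime parameter `γ_MTP-SI` is identified by the g-formula under `M1`. -/
theorem stochastic_regime_identification_M1
    (K : ℕ) (hK : 1 ≤ K) (Ω Lt : Type) [Fintype Ω] [Fintype Lt]
    (P : Ω → ℝ) (hP0 : ∀ ω, 0 ≤ P ω) (hP1 : (∑ ω, P ω) = 1)
    (L : Fin K → Ω → Lt) (A : Fin K → Ω → Fin 2) (Y : Ω → ℝ)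
    (Lc : (Fin K → Fin 2) → Fin K → Ω → Lt)
    (Ac : (Fin K → Fin 2) → Fin K → Ω → Fin 2)
    (Yc : (Fin K → Fin 2) → Ω → ℝ)
    (hcfpre : CfPrefixDep Lc Ac)
    (hcons : CfConsistent L A Y Lc Ac Yc)
    (q : Fin K → (Fin K → Lt) → (Fin K → Fin 2) → Fin 2 → ℝ)
    (hker : IsKernel q) (hkpre : KernelPrefixDep q)
    (hB12 : B12 P L A q)
    (hB14 : B14 P Lc Ac Yc) :
    stochMean P Lc Yc q = gform P L A Y q := by
  unfold stochMean gform
  rw [Finset.sum_comm]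
  refine Finset.sum_congr rfl fun a _ => ?_
  have e : expec P (fun ω => Yc a ω * ∏ t, q t (fun s => Lc a s ω) a (a t))
      = ∑ l : Fin K → Lt, rex P (Yc a) (fun ω => ∀ s, Lc a s ω = l s)
          * ∏ t, q t l a (a t) := by
    unfold expec rex
    simp_rw [Finset.sum_mul]
    rw [Finset.sum_comm]
    refine Finset.sum_congr rfl fun ω _ => ?_
    rw [Finset.sum_eq_single (fun s => Lc a s ω)]
    · simp only [implies_true, if_true]
      ring
    · intro b _ hb
      rw [if_neg, zero_mul]
      intro h
      exact hb (funext fun s => (h s).symm)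
    · intro h
      exact absurd (Finset.mem_univ _) h
  rw [e]
  refine Finset.sum_congr rfl fun l _ => ?_
  by_cases hq0 : ∏ t, q t l a (a t) = 0
  · rw [hq0, mul_zero, mul_zero]
  · congr 1
    have hq : ∀ t, 0 < q t l a (a t) := fun t =>
      lt_of_le_of_ne ((hker t l a).1 (a t))
        (Ne.symm (Finset.prod_ne_zero_iff.1 hq0 t (Finset.mem_univ t)))
    have ht := term_ident P hP0 hP1 L A Y Lc Ac Yc hcons q hB12 hB14 a l hq K le_rfl
    rw [ht]
    simp only [Fin.castLE_rfl, id]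
    congr 1
    unfold cexp
    congr 1
    · refine rex_congr P ?_ ?_
      · intro ω
        constructor
        · rintro ⟨h1, h2⟩
          refine ⟨fun s => ?_, fun s => h2 s s.isLt⟩
          rw [← (hcons.1 a s ω (fun r _ => h2 r r.isLt)).1]
          exact h1 s
        · rintro ⟨h1, h2⟩
          refine ⟨fun s => ?_, fun s _ => h2 s⟩
          rw [(hcons.1 a s ω (fun r _ => h2 r)).1]
          exact h1 s
      · rintro ω ⟨_, h2⟩
        exact hcons.2 a ω h2
    · refine pr_congr P fun ω => ?_
      simp
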